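/- Every 5-regular graph (finite, undirected, loopless, possibly with parallel edges) admits a zero-sum 6-flow, i.e., an assignment of values from {±1, ±2, ±3, ±4, ±5} to its edges such that for every vertex the sum of the values on the edges incident with that vertex is zero. -/

import Mathlib

/-- A finite undirected multigraph without loops: `E` indexes the edges, and each
edge has an unordered pair of distinct endpoints (parallel edges are allowed). -/
structure Multigraph (V : Type*) (E : Type*) where
  ends : E → Sym2 V
  loopless : ∀ e, ¬ (ends e).IsDiag

namespace Multigraph

variable {V E : Type*}

/-- The edges incident with a vertex `v`. -/
def incidence (G : Multigraph V E) [Fintype E] [DecidableEq V] (v : V) : Finset E :=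
  Finset.univ.filter fun e => v ∈ G.ends e

/-- The degree of a vertex `v`. -/
def degree (G : Multigraph V E) [Fintype E] [DecidableEq V] (v : V) : ℕ :=
  (G.incidence v).card

/-- A zero-sum flow: nonzero integer values on the edges summing to zero at
every vertex. -/
def IsZeroSumFlow (G : Multigraph V E) [Fintype E] [DecidableEq V] (f : E → ℤ) : Prop :=
  (∀ e, f e ≠ 0) ∧ ∀ v, ∑ e ∈ G.incidence v, f e = 0

/-- A zero-sum `k`-flow: a zero-sum flow with values in `{±1, …, ±(k-1)}`. -/
def IsZeroSumKFlow (G : Multigraph V E) [Fintype E] [DecidableEq V] (k : ℕ) (f : E → ℤ) : Prop :=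
  G.IsZeroSumFlow f ∧ ∀ e, |f e| ≤ (k : ℤ) - 1

end Multigraph

/-!
The heart of the matter is a pair of disjoint edge sets `A` and `B` such that every vertex lies
either on two edges of `A` and none of `B`, or on three edges of `B` and none of `A`. The values
`-9` on `A`, `-4` on `B` and `6` elsewhere then add up to zero at every vertex. Pairing up
directed edges with common tails and with common heads gives zero-sum values that are `±1` on `A`,
`0` on `B` and `0` or `±2` elsewhere. The sum of the two is even, and its half is the required
flow.

If there were a 2-factor, it could be taken as `A`, with `B` empty; what may prevent one from
existing are the bridges. Therefore the two ends of an edge are allowed to disagree about its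
membership if it is a bridge with a minimal side, called a leaf. Tutte's theorem provides such a
choice of two edges at every vertex, and by parity the end of the bridge inside the leaf never
chooses it. In the leaves whose bridge is chosen from outside, the chosen edges are full edges and
form `A`; in the rest of the graph the edges not chosen are full edges and form `B`.
-/

open Finset Function

section Counting

lemma card_filter_add_card_filter_compl {X : Type*} [Fintype X] [DecidableEq X] (s : Finset X)
    (p : X → Prop) [DecidablePred p] : #{x ∈ s | p x} + #{x ∈ sᶜ | p x} = #{x | p x} := by
  rw [← card_union_of_disjoint (disjoint_filter_filter disjoint_compl_right), ← filter_union,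
    union_compl]

lemma card_filter_fst_eq {X Y : Type*} [Fintype X] [DecidableEq X] [Fintype Y] (x : X) :
    #{p : X × Y | p.1 = x} = Fintype.card Y := by
  rw [← univ_product_univ, filter_product_left (· = x)]
  simp [filter_eq']

lemma sum_sum_ite_eq_eq_sum_card_mul_card {X Y B : Type*} [Fintype B] [DecidableEq B]
    (s : Finset X) (t : Finset Y) (f : X → B) (g : Y → B) :
    ∑ x ∈ s, ∑ y ∈ t, (if f x = g y then 1 else 0) =
      ∑ b, #{x ∈ s | f x = b} * #{y ∈ t | g y = b} := by
  simp only [card_filter, sum_mul_sum]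
  rw [sum_comm (s := univ)]
  refine sum_congr rfl fun x _ => ?_
  rw [sum_comm (s := univ)]
  refine sum_congr rfl fun y _ => ?_
  simp [eq_comm]

end Counting

section Involutions

variable {X A B : Type*}

lemma even_card_of_involutive {σ : X → X} (hσ : Involutive σ) (hfix : ∀ x, σ x ≠ x)
    {s : Finset X} (hs : ∀ x ∈ s, σ x ∈ s) : Even #s := by
  have hsum : ∑ _x ∈ s, (1 : ZMod 2) = 0 :=
    sum_involution (fun x _ => σ x) (fun _ _ => by decide) (fun x _ _ => hfix x) hs
      (fun x _ => hσ x)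
  simpa [ZMod.natCast_eq_zero_iff_even] using hsum

lemma exists_involutive_of_even_card [Fintype X] (hX : Even (Fintype.card X)) :
    ∃ σ : X → X, Involutive σ ∧ ∀ x, σ x ≠ x := by
  obtain ⟨n, hn⟩ := hX
  have e : X ≃ Fin n × Bool := Fintype.equivOfCardEq (by simp [hn, mul_two])
  refine ⟨fun x => e.symm ((e x).1, !(e x).2), fun x => by simp, fun x hx => ?_⟩
  simpa using congrArg (fun y => (e y).2) hx

lemma exists_involutive_of_even_fibers [Fintype X] [DecidableEq A] (s : X → A)
    (hs : ∀ a, Even #{x | s x = a}) :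
    ∃ σ : X → X, Involutive σ ∧ (∀ x, σ x ≠ x) ∧ ∀ x, s (σ x) = s x := by
  have hfiber (a : A) :
      ∃ τ : {x // s x = a} → {x // s x = a}, Involutive τ ∧ ∀ x, τ x ≠ x :=
    exists_involutive_of_even_card (by simpa [Fintype.card_subtype] using hs a)
  choose τ hτ hfix using hfiber
  let σ : X → X := fun x => τ (s x) ⟨x, rfl⟩
  have hσ : ∀ {a : A} (y : {x // s x = a}), σ y = τ a y := by
    rintro a ⟨x, rfl⟩
    rfl
  refine ⟨σ, fun x => ?_, fun x hx => hfix (s x) ⟨x, rfl⟩ (Subtype.ext hx), fun x => (τ _ _).2⟩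
  calc σ (σ x) = τ (s x) (τ (s x) ⟨x, rfl⟩) := hσ _
    _ = x := congrArg Subtype.val (hτ (s x) ⟨x, rfl⟩)

/- A relation `ρ ^ i x = σ x` would, by conjugating with a suitable power of `ρ`, produce a fixed
point of `σ` (if `i` is even) or of `τ` (if `i` is odd). -/
lemma not_sameCycle_mul_of_involutive {σ τ : Equiv.Perm X} (hσ : Involutive σ)
    (hτ : Involutive τ) (hσfix : ∀ x, σ x ≠ x) (hτfix : ∀ x, τ x ≠ x) (x : X) :
    ¬ (σ * τ).SameCycle x (σ x) := by
  have hσσ : σ * σ = 1 := Equiv.ext hσ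
  have hττ : τ * τ = 1 := Equiv.ext hτ
  have hinv : σ⁻¹ = σ := inv_eq_of_mul_eq_one_left hσσ
  have hconj (i : ℤ) : σ * (σ * τ) ^ i = (σ * τ) ^ (-i) * σ := by
    have hρ : σ * (σ * τ) * σ⁻¹ = (σ * τ)⁻¹ := by
      rw [mul_inv_rev, inv_eq_of_mul_eq_one_left hττ, hinv, ← mul_assoc, hσσ, one_mul]
    rw [zpow_neg, ← inv_zpow, ← hρ, conj_zpow, inv_mul_cancel_right]
  have hreflect (i j : ℤ) (hij : ((σ * τ) ^ (i + j)) x = σ x) :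
      σ (((σ * τ) ^ i) x) = ((σ * τ) ^ j) x := by
    rw [← Equiv.Perm.mul_apply, hconj, Equiv.Perm.mul_apply, ← hij, ← Equiv.Perm.mul_apply,
      ← zpow_add, neg_add_cancel_left]
  rintro ⟨i, hi⟩
  obtain ⟨m, rfl | rfl⟩ := Int.even_or_odd' i
  · exact hσfix _ (hreflect m m (by rwa [← two_mul]))
  · refine hτfix (((σ * τ) ^ m) x) ?_
    calc τ (((σ * τ) ^ m) x) = σ (((σ * τ) ^ (1 + m)) x) := by
          rw [zpow_one_add, Equiv.Perm.mul_apply, Equiv.Perm.mul_apply, hσ]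
      _ = ((σ * τ) ^ m) x := hreflect _ _ (by rwa [show 1 + m + m = 2 * m + 1 by ring])

/- The pairings by `σ` and `τ` form a graph with even cycles only. Each of them is split by its
proper 2-colouring into two orbits of `σ * τ`, so a linear order on the orbits yields the signs. -/
lemma exists_sign_of_involutive {σ τ : X → X} (hσ : Involutive σ) (hτ : Involutive τ)
    (hσfix : ∀ x, σ x ≠ x) (hτfix : ∀ x, τ x ≠ x) :
    ∃ ε : X → ℤˣ, (∀ x, ε (σ x) = -ε x) ∧ ∀ x, ε (τ x) = -ε x := by
  classical
  let ρ : Equiv.Perm X := hσ.toPerm * hτ.toPerm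
  let orbit : X → Quotient (Equiv.Perm.SameCycle.setoid ρ) := Quotient.mk _
  have horbit (x) : orbit x ≠ orbit (σ x) := fun h =>
    not_sameCycle_mul_of_involutive (σ := hσ.toPerm) (τ := hτ.toPerm) hσ hτ hσfix hτfix x
      (Quotient.exact h)
  have hρ (x) : orbit (ρ x) = orbit x :=
    Quotient.sound (Equiv.Perm.sameCycle_apply_left.2 (.refl _ _))
  have hτσ (x) : orbit (τ x) = orbit (σ x) := by
    rw [← hρ (τ x)]
    exact congrArg (orbit ∘ σ) (hτ x)
  have hστ (x) : orbit (σ (τ x)) = orbit x := hρ x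
  let _ : LinearOrder (Quotient (Equiv.Perm.SameCycle.setoid ρ)) :=
    linearOrderOfSTO WellOrderingRel
  refine ⟨fun x => if orbit x < orbit (σ x) then 1 else -1, fun x => ?_, fun x => ?_⟩ <;>
    rcases (horbit x).lt_or_gt with h | h <;>
    simp [hσ x, hτσ, hστ, h, h.not_gt]

lemma exists_balanced_sign [DecidableEq A] [DecidableEq B] {S : Finset X} {s : X → A} {t : X → B}
    (hs : ∀ a, Even #{x ∈ S | s x = a}) (ht : ∀ b, Even #{x ∈ S | t x = b}) :
    ∃ ε : X → ℤˣ, (∀ a, ∑ x ∈ S with s x = a, (ε x : ℤ) = 0) ∧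
      ∀ b, ∑ x ∈ S with t x = b, (ε x : ℤ) = 0 := by
  classical
  have hcard (p : X → Prop) [DecidablePred p] : #{x : S | p x} = #{x ∈ S | p x} := by
    rw [card_filter, card_filter, sum_coe_sort S fun x => if p x then 1 else 0]
  obtain ⟨σ, hσ, hσfix, hsσ⟩ := exists_involutive_of_even_fibers (fun x : S => s x)
    (fun a => (hcard fun x => s x = a).symm ▸ hs a)
  obtain ⟨τ, hτ, hτfix, htτ⟩ := exists_involutive_of_even_fibers (fun x : S => t x)
    (fun b => (hcard fun x => t x = b).symm ▸ ht b)
  obtain ⟨ε, hεσ, hετ⟩ := exists_sign_of_involutive hσ hτ hσfix hτfix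
  let ε' (x : X) : ℤˣ := if hx : x ∈ S then ε ⟨x, hx⟩ else 1
  have hsum (p : X → Prop) [DecidablePred p] :
      ∑ x ∈ S with p x, (ε' x : ℤ) = ∑ x : S with p x.1, (ε x : ℤ) := by
    rw [sum_filter, sum_filter, ← sum_coe_sort S]
    simp [ε']
  refine ⟨ε', fun a => ?_, fun b => ?_⟩ <;> rw [hsum]
  · exact sum_involution (fun x _ => σ x) (by simp [hεσ]) (fun x _ _ => hσfix x)
      (by simp [hsσ]) (fun x _ => hσ x)
  · exact sum_involution (fun x _ => τ x) (by simp [hετ]) (fun x _ _ => hτfix x)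
      (by simp [htτ]) (fun x _ => hτ x)

lemma two_mul_card_filter_eq_one {S : Finset X} {ε : X → ℤˣ} (hε : ∑ x ∈ S, (ε x : ℤ) = 0) :
    2 * #{x ∈ S | ε x = 1} = #S := by
  have hval (x : X) : (ε x : ℤ) = 2 * (if ε x = 1 then 1 else 0) - 1 := by
    rcases Int.units_eq_one_or (ε x) with h | h <;> simp [h]
  simp only [hval, sum_sub_distrib, ← mul_sum, sum_boole, sum_const, nsmul_eq_mul] at hε
  lia

end Involutions

section Tutte

variable {W : Type*} {G : SimpleGraph W} {S : Finset W} {K : Finset (Finset W)}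

/-- `K` consists of pairwise disjoint odd sets of vertices outside `S`, each of which can be left
along an edge only into `S`. The odd components of `G - S` form such a family. -/
structure IsOddSeparation (G : SimpleGraph W) (S : Finset W) (K : Finset (Finset W)) : Prop where
  pairwiseDisjoint : (K : Set (Finset W)).PairwiseDisjoint id
  disjoint : ∀ C ∈ K, Disjoint C S
  odd : ∀ C ∈ K, Odd #C
  mem_of_adj : ∀ C ∈ K, ∀ x ∈ C, ∀ y ∉ C, G.Adj x y → y ∈ S

lemma exists_isOddSeparation_card_eq_ncard_oddComponents [Finite W] (G : SimpleGraph W)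
    (S : Finset W) :
    ∃ K, IsOddSeparation G S K ∧
      #K = ((⊤ : G.Subgraph).deleteVerts S).coe.oddComponents.ncard := by
  classical
  let _ := Fintype.ofFinite W
  set H := ((⊤ : G.Subgraph).deleteVerts S).coe
  let support (c : H.ConnectedComponent) : Finset W := c.supp.toFinset.map (.subtype _)
  have hinj : Injective support := fun c d hcd =>
    SimpleGraph.ConnectedComponent.supp_injective (Set.toFinset_inj.1 (map_injective _ hcd))
  have hmem {c x} : x ∈ support c ↔ ∃ y ∈ c.supp, y.1 = x := by simp [support]
  refine ⟨H.oddComponents.toFinset.image support, ⟨?_, ?_, ?_, ?_⟩, ?_⟩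
  · simp only [coe_image, Set.coe_toFinset]
    rintro _ ⟨c, -, rfl⟩ _ ⟨d, -, rfl⟩ hcd
    rw [onFun, id, id, disjoint_map, Set.disjoint_toFinset]
    exact SimpleGraph.pairwise_disjoint_supp_connectedComponent H (fun h => hcd (h ▸ rfl))
  · simp only [forall_mem_image, disjoint_left, hmem]
    rintro c - _ ⟨y, -, rfl⟩
    simpa using y.2
  · simp only [forall_mem_image, Set.mem_toFinset]
    intro c hc
    rw [card_map, ← Set.ncard_eq_toFinset_card']
    exact hc
  · simp only [forall_mem_image, hmem]
    rintro c - _ ⟨x, hx, rfl⟩ y hy hxy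
    by_contra hyS
    refine hy ⟨⟨y, by simpa using hyS⟩, ?_, rfl⟩
    refine c.mem_supp_of_adj_mem_supp hx ?_
    have hxS : x.1 ∉ S := by simpa using x.2
    simp [H, hxS, hyS, hxy]
  · rw [card_image_of_injective _ hinj, Set.ncard_eq_toFinset_card']

lemma exists_isPerfectMatching_of_isOddSeparation_card_le [Fintype W] (hW : Even (Fintype.card W))
    (hG : ∀ S K, IsOddSeparation G S K → #K ≤ #S + 1) :
    ∃ M : G.Subgraph, M.IsPerfectMatching := by
  classical
  rw [SimpleGraph.tutte]
  intro S hS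
  lift S to Finset W using S.toFinite
  obtain ⟨K, hK, hcard⟩ := exists_isOddSeparation_card_eq_ncard_oddComponents G S
  have hparity := SimpleGraph.odd_ncard_oddComponents ((⊤ : G.Subgraph).deleteVerts S).coe
  have hcompl : Nat.card ((⊤ : G.Subgraph).deleteVerts S).verts + #S = Fintype.card W := by
    simp [← Set.compl_eq_univ_sdiff, ← coe_compl, Nat.sub_add_cancel (card_le_univ S)]
  rw [SimpleGraph.IsTutteViolator, ← hcard, Set.ncard_coe_finset] at hS
  rw [← hcard] at hparity
  have := hG S K hK
  grind

lemma IsOddSeparation.card_filter_not_disjoint_le_one [DecidableEq W]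
    (hK : IsOddSeparation G S K) {Z : Finset W} (hZ : G.IsClique Z) :
    #{C ∈ K | ¬ Disjoint C Z} ≤ 1 := by
  simp only [card_le_one, mem_filter, not_disjoint_iff]
  rintro C ⟨hC, x, hxC, hxZ⟩ D ⟨hD, y, hyD, hyZ⟩
  by_contra hCD
  have hyC : y ∉ C := disjoint_right.1 (hK.pairwiseDisjoint hC hD hCD) hyD
  have hxy : G.Adj x y := hZ hxZ hyZ (ne_of_mem_of_not_mem hxC hyC)
  exact disjoint_left.1 (hK.disjoint D hD) hyD (hK.mem_of_adj C hC x hxC y hyC hxy)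

lemma IsOddSeparation.sum_weight_le [Fintype W] [DecidableEq W] (hK : IsOddSeparation G S K)
    {w : W → W → ℕ} {c : ℕ} (hw : ∀ x y, w x y ≠ 0 → G.Adj x y) (hc : ∀ y, ∑ x, w x y ≤ c) :
    ∑ C ∈ K, ∑ x ∈ C, ∑ y ∈ Cᶜ, w x y ≤ c * #S :=
  calc ∑ C ∈ K, ∑ x ∈ C, ∑ y ∈ Cᶜ, w x y
      ≤ ∑ C ∈ K, ∑ x ∈ C, ∑ y ∈ S, w x y :=
        sum_le_sum fun C hC => sum_le_sum fun x hx => sum_le_sum_of_ne_zero fun y hy hxy =>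
          hK.mem_of_adj C hC x hx y (mem_compl.1 hy) (hw x y hxy)
    _ = ∑ x ∈ K.biUnion id, ∑ y ∈ S, w x y := (sum_biUnion hK.pairwiseDisjoint).symm
    _ ≤ ∑ x, ∑ y ∈ S, w x y := sum_le_sum_of_subset (subset_univ _)
    _ = ∑ y ∈ S, ∑ x, w x y := sum_comm
    _ ≤ ∑ _y ∈ S, c := sum_le_sum fun y _ => hc y
    _ = c * #S := by rw [sum_const, smul_eq_mul, mul_comm]

/- The members of an odd separation that avoid `Z` send weight at least `c` each to `S`, which can
take only `c * #S`, and at most one member meets the clique `Z`. -/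
lemma exists_isPerfectMatching_of_weight [Fintype W] [DecidableEq W]
    (hW : Even (Fintype.card W)) (w : W → W → ℕ) {c : ℕ} (hc : 0 < c)
    (hw : ∀ x y, w x y ≠ 0 → G.Adj x y) (hsum : ∀ y, ∑ x, w x y ≤ c)
    {Z : Finset W} (hZ : G.IsClique Z)
    (hcut : ∀ C : Finset W, Disjoint C Z → Odd #C → c ≤ ∑ x ∈ C, ∑ y ∈ Cᶜ, w x y) :
    ∃ M : G.Subgraph, M.IsPerfectMatching := by
  refine exists_isPerfectMatching_of_isOddSeparation_card_le hW fun S K hK => ?_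
  have hdisj : c * #{C ∈ K | Disjoint C Z} ≤ c * #S :=
    calc c * #{C ∈ K | Disjoint C Z} = ∑ C ∈ K with Disjoint C Z, c := by
          rw [sum_const, smul_eq_mul, mul_comm]
      _ ≤ ∑ C ∈ K with Disjoint C Z, ∑ x ∈ C, ∑ y ∈ Cᶜ, w x y :=
          sum_le_sum fun C hC => hcut C (mem_filter.1 hC).2 (hK.odd C (mem_filter.1 hC).1)
      _ ≤ ∑ C ∈ K, ∑ x ∈ C, ∑ y ∈ Cᶜ, w x y := sum_le_sum_of_subset (filter_subset _ _)
      _ ≤ c * #S := hK.sum_weight_le hw hsum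
  calc #K = #{C ∈ K | Disjoint C Z} + #{C ∈ K | ¬ Disjoint C Z} :=
        (card_filter_add_card_filter_not _).symm
    _ ≤ #S + 1 := add_le_add (Nat.le_of_mul_le_mul_left hdisj hc)
        (hK.card_filter_not_disjoint_le_one hZ)

end Tutte

namespace Multigraph

variable {V E : Type*} {G : Multigraph V E}

/-- An edge of `G` together with one of its two ends, thought of as the edge directed away from
that end. -/
@[ext]
structure Dart (G : Multigraph V E) where
  edge : E
  tail : V
  mem : tail ∈ G.ends edge
deriving DecidableEq

instance [Fintype E] [DecidableEq V] : Fintype G.Dart :=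
  Fintype.ofEquiv (Σ e, {v // v ∈ (G.ends e).toFinset})
    ⟨fun p => ⟨p.1, p.2.1, Sym2.mem_toFinset.1 p.2.2⟩,
      fun d => ⟨d.edge, d.tail, Sym2.mem_toFinset.2 d.mem⟩, fun _ => rfl, fun _ => rfl⟩

namespace Dart

/-- The same edge directed the other way, so that `d.flip.tail` is the head of `d`. -/
noncomputable def flip (d : G.Dart) : G.Dart :=
  ⟨d.edge, Sym2.Mem.other d.mem, Sym2.other_mem d.mem⟩

@[simp]
lemma edge_flip (d : G.Dart) : d.flip.edge = d.edge := rfl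

@[simp]
lemma flip_flip (d : G.Dart) : d.flip.flip = d :=
  Dart.ext rfl (Sym2.other_invol d.mem d.flip.mem)

lemma flip_involutive : Involutive (flip : G.Dart → G.Dart) := flip_flip

lemma ends_edge (d : G.Dart) : G.ends d.edge = s(d.tail, d.flip.tail) :=
  (Sym2.other_spec d.mem).symm

lemma tail_flip_ne (d : G.Dart) : d.flip.tail ≠ d.tail :=
  Sym2.other_ne (G.loopless d.edge) d.mem

lemma flip_ne (d : G.Dart) : d.flip ≠ d := fun h => d.tail_flip_ne (congrArg tail h)

lemma edge_eq_iff {d d' : G.Dart} : d'.edge = d.edge ↔ d' = d ∨ d' = d.flip := by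
  refine ⟨fun h => ?_, by rintro (rfl | rfl) <;> rfl⟩
  have hmem := d'.mem
  rw [h, ends_edge, Sym2.mem_iff] at hmem
  exact hmem.imp (Dart.ext h) (Dart.ext h)

lemma exists_edge_eq (e : E) : ∃ d : G.Dart, d.edge = e :=
  ⟨⟨e, (G.ends e).out.1, Sym2.out_fst_mem _⟩, rfl⟩

end Dart

section Fintype

variable [Fintype E] [DecidableEq V]

lemma sum_tail_eq {M : Type*} [AddCommMonoid M] (v : V) (f : E → M) :
    ∑ d : G.Dart with d.tail = v, f d.edge = ∑ e ∈ G.incidence v, f e := by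
  refine sum_bij (fun d _ => d.edge) ?_ ?_ ?_ (fun _ _ => rfl)
  · rintro d hd
    obtain rfl := (mem_filter.1 hd).2
    simpa [incidence] using d.mem
  · rintro d hd d' hd' h
    exact Dart.ext h ((mem_filter.1 hd).2.trans (mem_filter.1 hd').2.symm)
  · intro e he
    exact ⟨⟨e, v, (mem_filter.1 he).2⟩, by simp, rfl⟩

lemma sum_tail_flip_eq {M : Type*} [AddCommMonoid M] (v : V) (g : G.Dart → M) :
    ∑ d : G.Dart with d.flip.tail = v, g d = ∑ d : G.Dart with d.tail = v, g d.flip :=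
  sum_equiv Dart.flip_involutive.toPerm (by simp) (by simp)

lemma sum_edge_eq [DecidableEq E] {M : Type*} [AddCommMonoid M] (d : G.Dart) (g : G.Dart → M) :
    ∑ d' : G.Dart with d'.edge = d.edge, g d' = g d + g d.flip := by
  rw [← sum_pair d.flip_ne.symm]
  congr 1
  ext d'
  simp [Dart.edge_eq_iff]

end Fintype

/-- The degree of `v` in the spanning subgraph with edge set `A`. -/
def degreeIn [DecidableEq V] (G : Multigraph V E) (A : Finset E) (v : V) : ℕ :=
  #{e ∈ A | v ∈ G.ends e}

section Flow

variable [DecidableEq V]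

lemma card_filter_incidence_eq_degreeIn [Fintype E] [DecidableEq E] (A : Finset E) (v : V) :
    #{e ∈ G.incidence v | e ∈ A} = G.degreeIn A v := by
  rw [degreeIn, incidence, filter_comm, filter_univ_mem]

lemma degreeIn_add_degreeIn_compl [Fintype E] [DecidableEq E] (A : Finset E) (v : V) :
    G.degreeIn A v + G.degreeIn Aᶜ v = G.degree v :=
  card_filter_add_card_filter_compl A (v ∈ G.ends ·)

lemma degreeIn_union [DecidableEq E] {A B : Finset E} (hAB : Disjoint A B) (v : V) :
    G.degreeIn (A ∪ B) v = G.degreeIn A v + G.degreeIn B v := by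
  rw [degreeIn, filter_union, card_union_of_disjoint (disjoint_filter_filter hAB)]
  rfl

lemma card_filter_tail_eq_degreeIn [Fintype E] [DecidableEq E] (A : Finset E) (v : V) :
    #{d : G.Dart | d.tail = v ∧ d.edge ∈ A} = G.degreeIn A v := by
  rw [← filter_filter, card_filter, sum_tail_eq v fun e => if e ∈ A then 1 else 0, ← card_filter,
    card_filter_incidence_eq_degreeIn]

lemma card_filter_tail_flip_eq_degreeIn [Fintype E] [DecidableEq E] (A : Finset E) (v : V) :
    #{d : G.Dart | d.flip.tail = v ∧ d.edge ∈ A} = G.degreeIn A v := by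
  rw [← card_filter_tail_eq_degreeIn]
  exact card_equiv Dart.flip_involutive.toPerm (by simp)

lemma exists_balanced_orientation [Finite E] {A : Finset E} (hA : ∀ v, Even (G.degreeIn A v)) :
    ∃ O : Finset G.Dart, (∀ d ∈ O, d.edge ∈ A) ∧ (∀ d, d.edge ∈ A → (d.flip ∈ O ↔ d ∉ O)) ∧
      ∀ v, 2 * #{d ∈ O | d.tail = v} = G.degreeIn A v ∧
        2 * #{d ∈ O | d.flip.tail = v} = G.degreeIn A v := by
  classical
  let _ := Fintype.ofFinite E
  let S : Finset G.Dart := {d | d.edge ∈ A}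
  have hcard (v : V) : #{d ∈ S | d.tail = v} = G.degreeIn A v := by
    rw [filter_filter, ← card_filter_tail_eq_degreeIn]
    simp only [and_comm]
  obtain ⟨ε, hεedge, hεtail⟩ := exists_balanced_sign (S := S) (s := Dart.edge) (t := Dart.tail)
    (fun e => even_card_of_involutive Dart.flip_involutive Dart.flip_ne (by simp [S]))
    (fun v => (hcard v).symm ▸ hA v)
  have hflip (d : G.Dart) (hd : d ∈ S) : ε d.flip = -ε d := by
    have hset : {d' ∈ S | d'.edge = d.edge} = ({d' | d'.edge = d.edge} : Finset G.Dart) := by grind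
    have hsum := hεedge d.edge
    rw [hset, sum_edge_eq d fun d => (ε d : ℤ)] at hsum
    exact Units.ext (by push_cast; lia)
  refine ⟨{d ∈ S | ε d = 1}, by simp +contextual [S], fun d hd => ?_, fun v => ⟨?_, ?_⟩⟩
  · rcases Int.units_eq_one_or (ε d) with h | h <;> simp [S, hd, hflip d (by simpa [S]), h]
  · rw [filter_comm, two_mul_card_filter_eq_one (hεtail v), hcard]
  · rw [← hcard, ← two_mul_card_filter_eq_one (S := {d ∈ S | d.tail = v}) (ε := -ε)
      (by simpa using hεtail v)]
    refine congrArg _ (card_equiv Dart.flip_involutive.toPerm fun d => ?_)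
    by_cases hd : d ∈ S
    · simp [hd, hflip d hd, show d.flip ∈ S by simpa [S] using hd, and_comm]
    · simp [hd, show d.flip ∉ S by simpa [S] using hd]

lemma exists_balanced_weight [Fintype E] {S : Finset G.Dart}
    (htail : ∀ v, Even #{d ∈ S | d.tail = v})
    (hhead : ∀ v, Even #{d ∈ S | d.flip.tail = v}) :
    ∃ g : G.Dart → ℤ, (∀ d ∈ S, g d = 1 ∨ g d = -1) ∧ (∀ d ∉ S, g d = 0) ∧
      ∀ v, ∑ d with d.tail = v, (g d + g d.flip) = 0 := by
  classical
  obtain ⟨ε, hεtail, hεhead⟩ := exists_balanced_sign htail hhead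
  refine ⟨fun d => if d ∈ S then ε d else 0, fun d hd => ?_, fun d hd => if_neg hd, fun v => ?_⟩
  · rcases Int.units_eq_one_or (ε d) with h | h <;> simp [hd, h]
  · rw [sum_add_distrib, ← sum_tail_flip_eq v fun d => if d ∈ S then (ε d : ℤ) else 0,
      ← sum_filter, ← sum_filter, filter_comm, filter_univ_mem, hεtail, filter_comm,
      filter_univ_mem, hεhead, add_zero]

/- Let `S` consist of both darts over every edge of `P` and of one dart over every edge of `A`. If
every vertex is the tail and the head of evenly many darts of `S`, then balanced signs on `S` exist,
and the label of an edge is the sum of the signs of the darts over it. -/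
lemma exists_zero_sum_labelling [Fintype E] {A P : Finset E} (hAP : Disjoint A P)
    (hdeg : ∀ v, 4 ∣ G.degreeIn A v + 2 * G.degreeIn P v) :
    ∃ h : E → ℤ, (∀ e ∈ A, h e = 1 ∨ h e = -1) ∧ (∀ e ∈ P, h e = -2 ∨ h e = 0 ∨ h e = 2) ∧
      (∀ e, e ∉ A → e ∉ P → h e = 0) ∧ ∀ v, ∑ e ∈ G.incidence v, h e = 0 := by
  classical
  obtain ⟨O, hOA, hO, hOdeg⟩ := G.exists_balanced_orientation (A := A) (fun v => by grind)
  let S : Finset G.Dart := {d | d.edge ∈ P ∨ d ∈ O}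
  have hcard (p : G.Dart → Prop) [DecidablePred p] :
      #{d ∈ S | p d} = #{d : G.Dart | p d ∧ d.edge ∈ P} + #{d ∈ O | p d} := by
    rw [← card_union_of_disjoint]
    · congr 1
      grind
    · grind [disjoint_left]
  obtain ⟨g, hg, hg0, hgsum⟩ := exists_balanced_weight (S := S)
    (fun v => by
      rw [hcard, card_filter_tail_eq_degreeIn]
      grind)
    (fun v => by
      rw [hcard, card_filter_tail_flip_eq_degreeIn]
      grind)
  have hflip (d : G.Dart) : d.flip ∈ S ↔ d.edge ∈ P ∨ d.flip ∈ O := by simp [S]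
  have hsum (p : E → ℤ → Prop) (hp : ∀ d : G.Dart, p d.edge (g d + g d.flip)) (e : E) :
      p e (∑ d : G.Dart with d.edge = e, g d) := by
    obtain ⟨d, rfl⟩ := Dart.exists_edge_eq (G := G) e
    exact sum_edge_eq d g ▸ hp d
  refine ⟨fun e => ∑ d : G.Dart with d.edge = e, g d, ?_, ?_, ?_, fun v => ?_⟩
  · refine hsum (fun e x => e ∈ A → x = 1 ∨ x = -1) ?_
    grind [disjoint_left]
  · refine hsum (fun e x => e ∈ P → x = -2 ∨ x = 0 ∨ x = 2) ?_
    grind [disjoint_left]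
  · refine hsum (fun e x => e ∉ A → e ∉ P → x = 0) ?_
    grind [Dart.edge_flip]
  · rw [← sum_tail_eq v, ← hgsum v]
    exact sum_congr rfl fun d _ => sum_edge_eq d g

end Flow

section Leaves

variable [Fintype E] [DecidableEq V]

/-- The darts leading from a vertex set `Y` to its complement; there is one for each edge of the
cut around `Y`. -/
noncomputable def outDarts (G : Multigraph V E) (Y : Finset V) : Finset G.Dart :=
  {d | d.tail ∈ Y ∧ d.flip.tail ∉ Y}

/-- `X` is minimal among the vertex sets whose cut is a single edge. -/
def IsLeaf (G : Multigraph V E) (X : Finset V) : Prop :=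
  Minimal (fun Y => #(G.outDarts Y) = 1) X

/-- The bridges that cut off a leaf. -/
def leafBridges (G : Multigraph V E) : Set E :=
  {e | ∃ X, G.IsLeaf X ∧ ∃ d ∈ G.outDarts X, d.edge = e}

lemma mem_outDarts {Y : Finset V} {d : G.Dart} :
    d ∈ G.outDarts Y ↔ d.tail ∈ Y ∧ d.flip.tail ∉ Y := by
  simp [outDarts]

lemma exists_isLeaf_subset {Y : Finset V} (hY : #(G.outDarts Y) = 1) : ∃ X ⊆ Y, G.IsLeaf X :=
  exists_minimal_le_of_wellFoundedLT _ Y hY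

lemma IsLeaf.eq_of_mem_outDarts {X : Finset V} (hX : G.IsLeaf X) {d d' : G.Dart}
    (hd : d ∈ G.outDarts X) (hd' : d' ∈ G.outDarts X) : d = d' :=
  card_le_one.1 hX.prop.le d hd d' hd'

lemma exists_tail_mem_edge_mem_leafBridges {Y : Finset V} (hY : #(G.outDarts Y) = 1) :
    ∃ d : G.Dart, d.tail ∈ Y ∧ d.edge ∈ G.leafBridges := by
  obtain ⟨X, hXY, hX⟩ := exists_isLeaf_subset hY
  obtain ⟨d, hd⟩ := card_pos.1 (hX.prop ▸ one_pos)
  exact ⟨d, hXY (mem_outDarts.1 hd).1, X, hX, d, hd, rfl⟩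

/- If the bridge `d` around `Y` ran inside `X`, it would split `X` into `X ∩ Y` and `X \ Y`, and
the part not containing the end of the bridge around `X` would have `d` as its only cut edge. -/
lemma IsLeaf.tail_flip_notMem {X Y : Finset V} (hX : G.IsLeaf X) (hY : #(G.outDarts Y) = 1)
    {d : G.Dart} (hd : d ∈ G.outDarts Y) (hdX : d.tail ∈ X) : d.flip.tail ∉ X := by
  intro hdX'
  obtain ⟨f, hf⟩ := card_eq_one.1 hX.prop
  obtain ⟨d', hd'⟩ := card_eq_one.1 hY
  obtain rfl : d = d' := by simpa [hd'] using hd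
  have hfX (x : G.Dart) : x.tail ∈ X ∧ x.flip.tail ∉ X ↔ x = f := by
    rw [← mem_outDarts, hf, mem_singleton]
  have hdY (x : G.Dart) : x.tail ∈ Y ∧ x.flip.tail ∉ Y ↔ x = d := by
    rw [← mem_outDarts, hd', mem_singleton]
  by_cases hfY : f.tail ∈ Y
  · have hcut : G.outDarts (X \ Y) = {d.flip} := by
      ext x
      grind [mem_outDarts, Dart.flip_flip]
    exact (mem_sdiff.1 (hX.2 (by simp [hcut]) sdiff_subset hdX)).2 (mem_outDarts.1 hd).1
  · have hcut : G.outDarts (X ∩ Y) = {d} := by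
      ext x
      grind [mem_outDarts, Dart.flip_flip]
    exact (mem_outDarts.1 hd).2 (mem_inter.1 (hX.2 (by simp [hcut]) inter_subset_left hdX')).2

lemma IsLeaf.edge_notMem_leafBridges {X : Finset V} (hX : G.IsLeaf X) {d : G.Dart}
    (hd : d.tail ∈ X) (hd' : d.flip.tail ∈ X) : d.edge ∉ G.leafBridges := by
  rintro ⟨Y, hY, f, hf, hfd⟩
  obtain rfl | rfl := Dart.edge_eq_iff.1 hfd
  · exact hX.tail_flip_notMem hY.prop hf hd hd'
  · exact hX.tail_flip_notMem hY.prop hf hd' (by simpa using hd)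

/-- `M` contains `k` of the darts out of every vertex and, except over leaf bridges, both or
neither of the two darts over an edge. It is a `k`-factor if there are no leaf bridges. -/
structure IsSemifactor (G : Multigraph V E) (k : ℕ) (M : Finset G.Dart) : Prop where
  flip_mem_iff : ∀ d, d.edge ∉ G.leafBridges → (d.flip ∈ M ↔ d ∈ M)
  card_tail : ∀ v, #{d ∈ M | d.tail = v} = k

/-- The vertices of those leaves whose bridge is entered by a dart of `M`. -/
def enteredLeaves (M : Finset G.Dart) : Set V :=
  {v | ∃ X, G.IsLeaf X ∧ v ∈ X ∧ ∃ d ∈ G.outDarts X, d.flip ∈ M}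

namespace IsSemifactor

variable {k : ℕ} {M : Finset G.Dart} {X : Finset V} {d : G.Dart}

lemma notMem_of_mem_outDarts (hM : G.IsSemifactor k M) (hk : Even k) (hX : G.IsLeaf X)
    (hd : d ∈ G.outDarts X) : d ∉ M := by
  classical
  intro hdM
  have hdX := mem_outDarts.1 hd
  have hcard : Even #{x ∈ M | x.tail ∈ X} := by
    rw [card_eq_sum_card_fiberwise (t := X) (f := Dart.tail) (by simp [Set.MapsTo])]
    refine even_sum _ fun v hv => ?_
    rw [filter_filter, filter_congr (q := (Dart.tail · = v)) (by grind), hM.card_tail]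
    exact hk
  have herase : Even #({x ∈ M | x.tail ∈ X}.erase d) := by
    refine even_card_of_involutive Dart.flip_involutive Dart.flip_ne fun x hx => ?_
    simp only [mem_erase, mem_filter] at hx ⊢
    have hxX : x.flip.tail ∈ X := by
      by_contra hxX
      exact hx.1 (hX.eq_of_mem_outDarts (mem_outDarts.2 ⟨hx.2.2, hxX⟩) hd)
    refine ⟨?_, (hM.flip_mem_iff x (hX.edge_notMem_leafBridges hx.2.2 hxX)).2 hx.2.1, hxX⟩
    rintro rfl
    exact hdX.2 (by simpa using hx.2.2)
  rw [← card_erase_add_one (mem_filter.2 ⟨hdM, hdX.1⟩)] at hcard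
  exact Nat.not_even_iff_odd.2 herase.add_one hcard

lemma flip_mem_of_tail_mem_enteredLeaves (hM : G.IsSemifactor k M) (hk : Even k)
    (hd : d.tail ∈ enteredLeaves M) (hdM : d ∈ M) :
    d.flip ∈ M ∧ d.flip.tail ∈ enteredLeaves M := by
  obtain ⟨X, hX, hdX, hXM⟩ := hd
  have hdX' : d.flip.tail ∈ X := by
    by_contra hdX'
    exact hM.notMem_of_mem_outDarts hk hX (mem_outDarts.2 ⟨hdX, hdX'⟩) hdM
  exact ⟨(hM.flip_mem_iff d (hX.edge_notMem_leafBridges hdX hdX')).2 hdM, X, hX, hdX', hXM⟩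

lemma flip_notMem_of_tail_notMem_enteredLeaves (hM : G.IsSemifactor k M) (hk : Even k)
    (hd : d.tail ∉ enteredLeaves M) (hdM : d ∉ M) :
    d.flip ∉ M ∧ d.flip.tail ∉ enteredLeaves M := by
  have hflip : d.flip ∉ M := by
    intro hflip
    obtain ⟨X, hX, f, hf, hfd⟩ : d.edge ∈ G.leafBridges := by
      by_contra hH
      exact hdM ((hM.flip_mem_iff d hH).1 hflip)
    obtain rfl | rfl := Dart.edge_eq_iff.1 hfd
    · exact hd ⟨X, hX, (mem_outDarts.1 hf).1, f, hf, hflip⟩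
    · exact hM.notMem_of_mem_outDarts hk hX hf hflip
  refine ⟨hflip, ?_⟩
  rintro ⟨X, hX, hdX', f, hf, hfM⟩
  have hdX : d.tail ∉ X := fun hdX => hd ⟨X, hX, hdX, f, hf, hfM⟩
  have hfd := hX.eq_of_mem_outDarts hf (d' := d.flip) (mem_outDarts.2 ⟨hdX', by simpa⟩)
  exact hdM (by simpa [hfd] using hfM)

end IsSemifactor

lemma card_tail_eq_degree (v : V) : #{d : G.Dart | d.tail = v} = G.degree v := by
  rw [card_eq_sum_ones, sum_tail_eq v fun _ => 1, ← card_eq_sum_ones, degree]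

/- Inside the entered leaves `M` is a union of full edges, and outside them its complement is. -/
lemma IsSemifactor.exists_disjoint_degreeIn {k l : ℕ} {M : Finset G.Dart}
    (hM : G.IsSemifactor k M) (hk : Even k) (hdeg : ∀ v, G.degree v = k + l) :
    ∃ A B : Finset E, Disjoint A B ∧ ∀ v, G.degreeIn A v = k ∧ G.degreeIn B v = 0 ∨
      G.degreeIn A v = 0 ∧ G.degreeIn B v = l := by
  classical
  set T := enteredLeaves M
  have hin {d} (hd : d.tail ∈ T) (hdM : d ∈ M) : d.flip ∈ M ∧ d.flip.tail ∈ T :=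
    hM.flip_mem_of_tail_mem_enteredLeaves hk hd hdM
  have hout {d} (hd : d.tail ∉ T) (hdM : d ∉ M) : d.flip ∉ M ∧ d.flip.tail ∉ T :=
    hM.flip_notMem_of_tail_notMem_enteredLeaves hk hd hdM
  let A : Finset E := {e | ∀ x : G.Dart, x.edge = e → x ∈ M ∧ x.tail ∈ T}
  let B : Finset E := {e | ∀ x : G.Dart, x.edge = e → x ∉ M ∧ x.tail ∉ T}
  have hA (d : G.Dart) : d.edge ∈ A ↔ d ∈ M ∧ d.tail ∈ T := by
    grind [Dart.edge_eq_iff]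
  have hB (d : G.Dart) : d.edge ∈ B ↔ d ∉ M ∧ d.tail ∉ T := by
    grind [Dart.edge_eq_iff]
  have hMv (v : V) : #{d | d.tail = v ∧ d ∈ M} = k := by
    rw [← hM.card_tail v]
    congr 1
    grind
  have hMv' (v : V) : #{d | d.tail = v ∧ d ∉ M} = l := by
    have hsplit := card_filter_add_card_filter_not (s := {d : G.Dart | d.tail = v}) (· ∈ M)
    rw [filter_filter, filter_filter, card_tail_eq_degree, hdeg, hMv] at hsplit
    exact Nat.add_left_cancel hsplit
  refine ⟨A, B, ?_, fun v => ?_⟩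
  · rw [disjoint_left]
    intro e heA heB
    obtain ⟨d, rfl⟩ := Dart.exists_edge_eq (G := G) e
    exact ((hB d).1 heB).1 ((hA d).1 heA).1
  · simp only [← card_filter_tail_eq_degreeIn, hA, hB]
    by_cases hv : v ∈ T
    · refine .inl ⟨(congrArg card (filter_congr ?_)).trans (hMv v), card_eq_zero.2 ?_⟩ <;> grind
    · refine .inr ⟨card_eq_zero.2 ?_, (congrArg card (filter_congr ?_)).trans (hMv' v)⟩ <;> grind

end Leaves

section Gadget

variable {k l : ℕ}

/-- The graph whose perfect matchings are the semifactors of `G`: the two darts over an edge are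
joined, any two darts over leaf bridges are joined, and the darts out of `v` are joined to `k`
copies of `v`. A dart belongs to the semifactor if it is matched to a copy of its tail. -/
def gadget [Fintype E] [DecidableEq V] (G : Multigraph V E) (k : ℕ) :
    SimpleGraph (G.Dart ⊕ V × Fin k) where
  Adj
    | .inl d, .inl d' => d' = d.flip ∨ d ≠ d' ∧ d.edge ∈ G.leafBridges ∧ d'.edge ∈ G.leafBridges
    | .inl d, .inr p => d.tail = p.1
    | .inr p, .inl d => p.1 = d.tail
    | .inr _, .inr _ => False
  symm := ⟨by
    rintro (d | p) (d' | q) h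
    · grind [Dart.flip_flip]
    · exact h.symm
    · exact h.symm
    · exact h⟩
  loopless := ⟨by
    rintro (d | p) h
    · exact h.elim (fun h => d.flip_ne h.symm) fun h => h.1 rfl
    · exact h⟩

section Weight

variable [DecidableEq V] [DecidableEq E]

/-- Weights on the edges of `G.gadget k` under which all vertices have the same weight if `G` is
`(k + l)`-regular. -/
noncomputable def gadgetWeight (G : Multigraph V E) (k l : ℕ) :
    G.Dart ⊕ V × Fin k → G.Dart ⊕ V × Fin k → ℕ
  | .inl d, .inl d' => if d' = d.flip then l else 0
  | .inl d, .inr p => if d.tail = p.1 then 1 else 0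
  | .inr p, .inl d => if p.1 = d.tail then 1 else 0
  | .inr _, .inr _ => 0

lemma gadget_adj_of_gadgetWeight_ne_zero [Fintype E] {x y : G.Dart ⊕ V × Fin k}
    (h : G.gadgetWeight k l x y ≠ 0) : (G.gadget k).Adj x y := by
  rcases x with d | p <;> rcases y with d' | q <;>
    simp only [gadgetWeight, gadget, ne_eq, ite_eq_right_iff, not_forall, not_true_eq_false] at h ⊢
  · exact .inl h.1
  · exact h.1
  · exact h.1

lemma odd_card_filter_flip_notMem {J : Finset G.Dart}
    (hJ : Odd #J) : Odd #{d ∈ J | d.flip ∉ J} := by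
  have heven : Even #{d ∈ J | d.flip ∈ J} :=
    even_card_of_involutive Dart.flip_involutive Dart.flip_ne (by simp +contextual)
  rw [← card_filter_add_card_filter_not (s := J) (fun d => d.flip ∈ J)] at hJ
  grind

variable [Fintype V] [Fintype E]

lemma sum_gadgetWeight (hdeg : ∀ v, G.degree v = k + l) (y : G.Dart ⊕ V × Fin k) :
    ∑ x, G.gadgetWeight k l x y = k + l := by
  rcases y with d | p
  · simp [gadgetWeight, ← Dart.flip_involutive.eq_iff, card_filter_fst_eq, add_comm]
  · simp [gadgetWeight, card_tail_eq_degree, hdeg]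

lemma sum_gadgetWeight_compl (J : Finset G.Dart) (I : Finset (V × Fin k)) :
    ∑ x ∈ J.disjSum I, ∑ y ∈ (J.disjSum I)ᶜ, G.gadgetWeight k l x y =
      l * #{d ∈ J | d.flip ∉ J} +
        ∑ v, (#{d ∈ J | d.tail = v} * #{p ∈ Iᶜ | p.1 = v} +
          #{p ∈ I | p.1 = v} * #{d ∈ Jᶜ | d.tail = v}) := by
  have hcompl : (J.disjSum I)ᶜ = Jᶜ.disjSum Iᶜ := by
    ext (d | p) <;> simp
  have hflip (d : G.Dart) : (∑ d' ∈ Jᶜ, if d' = d.flip then l else 0) =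
      if d.flip ∉ J then l else 0 := by
    simp
  simp only [hcompl, sum_disjSum, gadgetWeight, sum_add_distrib, hflip, sum_const_zero, add_zero,
    sum_sum_ite_eq_eq_sum_card_mul_card]
  rw [← sum_filter, sum_const, smul_eq_mul, mul_comm, add_assoc, add_right_inj,
    add_comm]

lemma card_filter_eq_zero_or_of_sum_gadgetWeight_lt (hdeg : ∀ v, G.degree v = k + l)
    {J : Finset G.Dart} {I : Finset (V × Fin k)}
    (hcut : ∑ x ∈ J.disjSum I, ∑ y ∈ (J.disjSum I)ᶜ, G.gadgetWeight k l x y < k + l) (v : V) :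
    #{p ∈ I | p.1 = v} = 0 ∨ #{p ∈ Iᶜ | p.1 = v} = 0 := by
  by_contra! h
  have hout := Nat.le_mul_of_pos_right #{d ∈ J | d.tail = v} h.2.pos
  have hin := Nat.le_mul_of_pos_left #{d ∈ Jᶜ | d.tail = v} h.1.pos
  have hsplit := card_filter_add_card_filter_compl J (·.tail = v)
  rw [card_tail_eq_degree, hdeg] at hsplit
  refine hcut.not_ge ?_
  rw [sum_gadgetWeight_compl]
  refine le_add_left (le_trans ?_ (single_le_sum (fun _ _ => Nat.zero_le _) (mem_univ v)))
  lia

/- Every vertex has all or none of its copies in the cut. So the number of copies is even and the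
number of crossing pairs of darts is odd, hence `1`, which leaves less than `k` for the rest of the
cut: the darts in `J` are exactly those out of the vertices with all copies in `I`. -/
lemma exists_card_outDarts_eq_one (hk : Even k) (hkl : k ≤ 2 * l)
    (hdeg : ∀ v, G.degree v = k + l) {J : Finset G.Dart} {I : Finset (V × Fin k)}
    (hodd : Odd #(J.disjSum I))
    (hcut : ∑ x ∈ J.disjSum I, ∑ y ∈ (J.disjSum I)ᶜ, G.gadgetWeight k l x y < k + l) :
    ∃ Y, #(G.outDarts Y) = 1 ∧ ∀ d : G.Dart, d.tail ∈ Y → d ∈ J := by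
  have hI (v : V) := card_filter_eq_zero_or_of_sum_gadgetWeight_lt hdeg hcut v
  have hsplit (v : V) := card_filter_add_card_filter_compl I (·.1 = v)
  simp only [card_filter_fst_eq, Fintype.card_fin] at hsplit
  rw [sum_gadgetWeight_compl] at hcut
  have hcross : #{d ∈ J | d.flip ∉ J} = 1 := by
    have hIeven : Even #I := by
      rw [card_eq_sum_card_fiberwise (t := univ) (f := Prod.fst) (by simp [Set.MapsTo])]
      exact even_sum _ fun v _ => by grind [hI v, hsplit v]
    have hcrossodd : Odd #{d ∈ J | d.flip ∉ J} :=
      odd_card_filter_flip_notMem (Nat.odd_add.1 (card_disjSum J I ▸ hodd) |>.2 hIeven)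
    have hlt : #{d ∈ J | d.flip ∉ J} < 3 := by
      by_contra! h
      have := Nat.mul_le_mul_left l h
      lia
    grind
  have hmem (d : G.Dart) : d ∈ J ↔ #{p ∈ I | p.1 = d.tail} = k := by
    have hpos (K : Finset G.Dart) (hd : d ∈ K) : 0 < #{d' ∈ K | d'.tail = d.tail} :=
      card_pos.2 ⟨d, by simpa⟩
    have hterm := single_le_sum (s := univ) (fun _ _ => Nat.zero_le _) (mem_univ d.tail)
      (f := fun v => #{d ∈ J | d.tail = v} * #{p ∈ Iᶜ | p.1 = v} +
        #{p ∈ I | p.1 = v} * #{d ∈ Jᶜ | d.tail = v})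
    rw [hcross] at hcut
    by_cases hd : d ∈ J
    · have := Nat.le_mul_of_pos_left k (hpos J hd)
      grind [hI d.tail, hsplit d.tail]
    · have := Nat.le_mul_of_pos_right k (hpos Jᶜ (mem_compl.2 hd))
      grind [hI d.tail, hsplit d.tail]
  refine ⟨({v | #{p ∈ I | p.1 = v} = k} : Finset V), ?_, fun d hd => (hmem d).2 (by simpa using hd)⟩
  rw [← hcross]
  congr 1
  ext d
  simp [mem_outDarts, hmem]

end Weight

section Semifactor

variable [Fintype E] [DecidableEq V]

lemma isSemifactor_of_isPerfectMatching {N : (G.gadget k).Subgraph} (hN : N.IsPerfectMatching)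
    {M : Finset G.Dart} (hM : ∀ d, d ∈ M ↔ ∃ t, N.Adj (.inl d) (.inr (d.tail, t))) :
    G.IsSemifactor k M := by
  rw [SimpleGraph.Subgraph.isPerfectMatching_iff] at hN
  have htail {d : G.Dart} {p} (h : N.Adj (.inl d) (.inr p)) : d.tail = p.1 := N.adj_sub h
  have hmem {d : G.Dart} {p} (h : N.Adj (.inl d) (.inr p)) : d ∈ M := (hM d).2 ⟨p.2, htail h ▸ h⟩
  have hflip {d : G.Dart} (hd : d.edge ∉ G.leafBridges) : d ∉ M ↔ N.Adj (.inl d) (.inl d.flip) := by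
    obtain ⟨d' | p, h, hunique⟩ := hN (.inl d)
    · obtain rfl : d' = d.flip := (N.adj_sub h).resolve_right fun h => hd h.2.1
      refine iff_of_true (fun hdM => ?_) h
      obtain ⟨t, ht⟩ := (hM d).1 hdM
      exact Sum.inr_ne_inl (hunique _ ht)
    · exact iff_of_false (not_not.2 (hmem h)) fun h' => Sum.inl_ne_inr (hunique _ h')
  refine ⟨fun d hd => ?_, fun v => ?_⟩
  · rw [← not_iff_not, hflip (d := d.flip) hd, hflip hd, Dart.flip_flip, N.adj_comm]
  · have hpartner (t : Fin k) : ∃ d : G.Dart, N.Adj (.inl d) (.inr (v, t)) := by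
      obtain ⟨d | p, h, -⟩ := hN (.inr (v, t))
      · exact ⟨d, h.symm⟩
      · exact (N.adj_sub h).elim
    choose f hf using hpartner
    rw [← Fintype.card_fin k, ← card_univ]
    refine (card_bij (fun t _ => f t) (fun t _ => ?_) (fun t _ t' _ h => ?_) fun d hd => ?_).symm
    · exact mem_filter.2 ⟨hmem (hf t), htail (hf t)⟩
    · have := (hN (.inl (f t))).unique (hf t) (h ▸ hf t')
      simpa using this
    · obtain ⟨hdM, rfl⟩ := mem_filter.1 hd
      obtain ⟨t, ht⟩ := (hM d).1 hdM
      have := (hN (.inr (d.tail, t))).unique (hf t).symm ht.symm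
      exact ⟨t, mem_univ t, Sum.inl_injective this⟩

lemma exists_isSemifactor [Finite V] (hk : Even k) (hkl : k ≤ 2 * l)
    (hdeg : ∀ v, G.degree v = k + l) : ∃ M, G.IsSemifactor k M := by
  classical
  cases nonempty_fintype V
  obtain rfl | hk₀ := Nat.eq_zero_or_pos k
  · exact ⟨∅, by simp, by simp⟩
  obtain ⟨N, hN⟩ : ∃ N : (G.gadget k).Subgraph, N.IsPerfectMatching := by
    refine exists_isPerfectMatching_of_weight ?_ (G.gadgetWeight k l) (c := k + l) (by lia)
      (fun x y => gadget_adj_of_gadgetWeight_ne_zero) (fun y => (sum_gadgetWeight hdeg y).le)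
      (Z := {x | ∃ d : G.Dart, d.edge ∈ G.leafBridges ∧ .inl d = x}) ?_ fun C hCZ hC => ?_
    · rw [Fintype.card_sum, Fintype.card_prod, Fintype.card_fin]
      exact (even_card_of_involutive (s := univ) Dart.flip_involutive Dart.flip_ne (by simp)).add
        (hk.mul_left _)
    · simp only [SimpleGraph.IsClique, Set.Pairwise, mem_coe, mem_filter_univ]
      rintro _ ⟨d, hd, rfl⟩ _ ⟨d', hd', rfl⟩ hne
      exact .inr ⟨fun h => hne (congrArg _ h), hd, hd'⟩
    · by_contra! hcut
      obtain ⟨J, I, rfl⟩ : ∃ (J : Finset G.Dart) (I : Finset (V × Fin k)), C = J.disjSum I :=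
        ⟨_, _, C.toLeft_disjSum_toRight.symm⟩
      obtain ⟨Y, hY, hYJ⟩ := exists_card_outDarts_eq_one hk hkl hdeg hC hcut
      obtain ⟨d, hdY, hd⟩ := exists_tail_mem_edge_mem_leafBridges hY
      exact disjoint_left.1 hCZ (inl_mem_disjSum.2 (hYJ d hdY))
        ((mem_filter_univ _).2 ⟨d, hd, rfl⟩)
  exact ⟨_, isSemifactor_of_isPerfectMatching hN fun d => mem_filter_univ d⟩

end Semifactor

end Gadget

section Conclusion

variable [Fintype E] [DecidableEq V]

lemma exists_disjoint_degreeIn [Finite V] {k l : ℕ} (hk : Even k) (hkl : k ≤ 2 * l)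
    (hdeg : ∀ v, G.degree v = k + l) :
    ∃ A B : Finset E, Disjoint A B ∧ ∀ v, G.degreeIn A v = k ∧ G.degreeIn B v = 0 ∨
      G.degreeIn A v = 0 ∧ G.degreeIn B v = l := by
  obtain ⟨M, hM⟩ := exists_isSemifactor hk hkl hdeg
  exact hM.exists_disjoint_degreeIn hk hdeg

/- Start from the doubled flow with value `6`, `6 - 15 = -9` on `A` and `6 - 10 = -4` on `B`. It
becomes even and small by adding `±1` on `A` and `0` or `±2` outside `A ∪ B`. -/
lemma exists_isZeroSumKFlow_six (hreg : ∀ v, G.degree v = 5) {A B : Finset E}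
    (hAB : Disjoint A B)
    (hdeg : ∀ v, G.degreeIn A v = 2 ∧ G.degreeIn B v = 0 ∨
      G.degreeIn A v = 0 ∧ G.degreeIn B v = 3) :
    ∃ f : E → ℤ, G.IsZeroSumKFlow 6 f := by
  classical
  have hcompl (v : V) : G.degreeIn A v + G.degreeIn B v + G.degreeIn (A ∪ B)ᶜ v = 5 := by
    rw [← degreeIn_union hAB, degreeIn_add_degreeIn_compl, hreg]
  obtain ⟨h, hA, hP, hB, hsum⟩ := G.exists_zero_sum_labelling (A := A) (P := (A ∪ B)ᶜ)
    (disjoint_compl_right.mono_left subset_union_left) (fun v => by grind)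
  let b (e : E) : ℤ := 6 - 15 * (if e ∈ A then 1 else 0) - 10 * (if e ∈ B then 1 else 0)
  have hb (v : V) : ∑ e ∈ G.incidence v, b e = 0 := by
    have hdegree : #(G.incidence v) = 5 := hreg v
    simp only [b, sum_sub_distrib, ← mul_sum, sum_boole, card_filter_incidence_eq_degreeIn,
      sum_const, hdegree]
    grind
  have hf (e : E) : ∃ x : ℤ, b e + h e = 2 * x ∧ x ≠ 0 ∧ |x| ≤ 5 := by
    by_cases heA : e ∈ A
    · have heB := disjoint_left.1 hAB heA
      obtain h₁ | h₁ := hA e heA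
      · exact ⟨-4, by simp [b, heA, heB, h₁]⟩
      · exact ⟨-5, by simp [b, heA, heB, h₁]⟩
    by_cases heB : e ∈ B
    · exact ⟨-2, by simp [b, heA, heB, hB e heA (by simp [heB])]⟩
    · obtain h₁ | h₁ | h₁ := hP e (by simp [heA, heB])
      · exact ⟨2, by simp [b, heA, heB, h₁]⟩
      · exact ⟨3, by simp [b, heA, heB, h₁]⟩
      · exact ⟨4, by simp [b, heA, heB, h₁]⟩
  choose f hbf hf₀ hf₅ using hf
  refine ⟨f, ⟨hf₀, fun v => ?_⟩, hf₅⟩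
  have hsum₂ : 2 * ∑ e ∈ G.incidence v, f e = 0 := by
    rw [mul_sum, ← sum_congr rfl fun e _ => hbf e, sum_add_distrib, hb, hsum, add_zero]
  lia

end Conclusion

end Multigraph

/-- Every 5-regular graph admits a zero-sum 6-flow. -/
theorem every_five_regular_graph_admits_zero_sum_six_flow
    {V E : Type*} [Fintype V] [Fintype E] [DecidableEq V]
    (G : Multigraph V E) (hreg : ∀ v, G.degree v = 5) :
    ∃ f : E → ℤ, G.IsZeroSumKFlow 6 f := by
  obtain ⟨A, B, hAB, hdeg⟩ := Multigraph.exists_disjoint_degreeIn even_two (l := 3) (by lia) hreg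
  exact Multigraph.exists_isZeroSumKFlow_six hreg hAB hdeg
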